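/- Let G be an edge-weighted graph, ρ > 0 a real, and suppose G has a tree decomposition in which every bag has size at most k. Then there exist a partition 𝒫 of V(G) into parts of weak diameter at most ρ and a total order ⪯ on 𝒫 such that for every real r > ρ, wcol_r(G,𝒫,⪯) ≤ min( k · 2^k · C(k+⌈2r/ρ⌉, k), (2⌈2r/ρ⌉+k+1)^(3⌈2r/ρ⌉+4) ), where C(·,·) denotes the binomial coefficient. -/

import Mathlib

open scoped ENNReal

namespace ScatterDim

variable {V : Type}





/-- Total weight of a walk in an edge-weighted graph. -/
noncomputable def walkWeight {G : SimpleGraph V} (w : Sym2 V → ℝ≥0∞)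
    {u v : V} (p : G.Walk u v) : ℝ≥0∞ :=
  (p.edges.map w).sum

/-- Shortest-path metric of an edge-weighted graph: the infimum of the total
weights of walks between the two vertices. -/
noncomputable def gdist (G : SimpleGraph V) (w : Sym2 V → ℝ≥0∞) (u v : V) : ℝ≥0∞ :=
  ⨅ p : G.Walk u v, walkWeight w p

/-- Shortest-path distance measured within the subgraph induced on `S`
(`⊤` if one of the endpoints is not in `S`). -/
noncomputable def distOn (G : SimpleGraph V) (w : Sym2 V → ℝ≥0∞) (S : Set V)
    (u v : V) : ℝ≥0∞ :=
  ⨅ (hu : u ∈ S), ⨅ (hv : v ∈ S), ⨅ (p : (G.induce S).Walk ⟨u, hu⟩ ⟨v, hv⟩),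
    (p.edges.map (fun e => w (e.map Subtype.val))).sum

/-- Distance between two sets of vertices inside the subgraph induced on `S`. -/
noncomputable def setDistOn (G : SimpleGraph V) (w : Sym2 V → ℝ≥0∞) (S : Set V)
    (A B : Set V) : ℝ≥0∞ :=
  ⨅ a ∈ A, ⨅ b ∈ B, distOn G w S a b

/-- Distance from a point to a set. -/
noncomputable def pdist (G : SimpleGraph V) (w : Sym2 V → ℝ≥0∞) (u : V) (X : Set V) : ℝ≥0∞ :=
  ⨅ x ∈ X, gdist G w u x

/-- `Y` is weakly `r`-reachable from `X` (with respect to the partition `P`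
ordered by `le`): there is a path of total weight at most `r` from a vertex of `X`
to a vertex of `Y` in the subgraph induced on the union of the parts `Z` with `Y ⪯ Z`. -/
def WReach (G : SimpleGraph V) (w : Sym2 V → ℝ≥0∞) (P : Set (Set V))
    (le : Set V → Set V → Prop) (r : ℝ) (X Y : Set V) : Prop :=
  setDistOn G w (⋃₀ {Z | Z ∈ P ∧ le Y Z}) X Y ≤ ENNReal.ofReal r

/-- The weak coloring number of `G` with respect to the partition `P`
and the order `le`: the maximum over `X ∈ P` of the number of parts weakly
`r`-reachable from `X`. -/
noncomputable def wcol (G : SimpleGraph V) (w : Sym2 V → ℝ≥0∞) (P : Set (Set V))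
    (le : Set V → Set V → Prop) (r : ℝ) : ℕ :=
  ⨆ X ∈ P, {Y | Y ∈ P ∧ WReach G w P le r X Y}.ncard

/-- `le` is a total (linear) order on the collection `P`. -/
def IsLinearOrderOn {α : Type} (P : Set α) (le : α → α → Prop) : Prop :=
  (∀ X ∈ P, le X X) ∧
  (∀ X ∈ P, ∀ Y ∈ P, le X Y → le Y X → X = Y) ∧
  (∀ X ∈ P, ∀ Y ∈ P, ∀ Z ∈ P, le X Y → le Y Z → le X Z) ∧
  (∀ X ∈ P, ∀ Y ∈ P, le X Y ∨ le Y X)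

/-- An `ε`-ladder of width `r` and length `ℓ` in the metric `dist`. -/
def IsLadder (dist : V → V → ℝ≥0∞) (ε r : ℝ) (ℓ : ℕ) (x p : Fin ℓ → V) : Prop :=
  (∀ i j : Fin ℓ, j < i → dist (p j) (x i) ≤ ENNReal.ofReal r) ∧
  (∀ i : Fin ℓ, ENNReal.ofReal ((1 + ε) * r) < dist (p i) (x i))

/-- `G` contains the complete graph on `h` vertices as a minor, witnessed by
pairwise disjoint connected nonempty branch sets that are pairwise adjacent. -/
def HasCompleteMinor (G : SimpleGraph V) (h : ℕ) : Prop :=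
  ∃ B : Fin h → Set V,
    (∀ i, (G.induce (B i)).Connected) ∧
    (∀ i j, i ≠ j → Disjoint (B i) (B j)) ∧
    (∀ i j, i ≠ j → ∃ u ∈ B i, ∃ v ∈ B j, G.Adj u v)

/-- `(T, bag)` is a tree decomposition of `G`. -/
def IsTreeDecompOf {ι : Type} (G : SimpleGraph V) (T : SimpleGraph ι) (bag : ι → Set V) : Prop :=
  T.IsTree ∧
  (∀ u v : V, G.Adj u v → ∃ t, u ∈ bag t ∧ v ∈ bag t) ∧
  (∀ v : V, (T.induce {t | v ∈ bag t}).Connected)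

/-- `G` has treewidth at most `n`. -/
def TreewidthAtMost (G : SimpleGraph V) (n : ℕ) : Prop :=
  ∃ (ι : Type) (T : SimpleGraph ι) (bag : ι → Set V),
    IsTreeDecompOf G T bag ∧ ∀ t, (bag t).ncard ≤ n + 1

/-- `D` is an `r`-cover of the edge-weighted graph `(G, w)`. -/
def IsCover (G : SimpleGraph V) (w : Sym2 V → ℝ≥0∞) (r : ℝ) (D : Set (Set V)) : Prop :=
  ∀ v : V, ∃ A ∈ D, ∀ u : V, gdist G w v u ≤ ENNReal.ofReal r → u ∈ A


inductive Rch (G : SimpleGraph V) (w : Sym2 V → ℝ≥0∞) (A : Set V) : V → V → ℝ≥0∞ → Prop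
  | nil (a : V) (ha : a ∈ A) : Rch G w A a a 0
  | cons (a b c : V) (q : ℝ≥0∞) (ha : a ∈ A) (hab : G.Adj a b) (h : Rch G w A b c q) :
      Rch G w A a c (w s(a, b) + q)

section basics

variable {G : SimpleGraph V} {w : Sym2 V → ℝ≥0∞}

lemma Rch.mem_left {A : Set V} {a b : V} {q : ℝ≥0∞} (h : Rch G w A a b q) : a ∈ A := by
  cases h <;> assumption

lemma Rch.mem_right {A : Set V} {a b : V} {q : ℝ≥0∞} (h : Rch G w A a b q) : b ∈ A := by
  induction h <;> assumption

lemma Rch.mono {A B : Set V} (hAB : A ⊆ B) {a b : V} {q : ℝ≥0∞} (h : Rch G w A a b q) :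
    Rch G w B a b q := by
  induction h with
  | nil a ha => exact Rch.nil a (hAB ha)
  | cons a b c q ha hab h ih => exact Rch.cons a b c q (hAB ha) hab ih

lemma Rch.trans {A : Set V} {a b c : V} {q q' : ℝ≥0∞} (h : Rch G w A a b q)
    (h' : Rch G w A b c q') : Rch G w A a c (q + q') := by
  induction h with
  | nil a ha => simpa using h'
  | cons a b c q ha hab h ih =>
    rw [add_assoc]; exact Rch.cons _ _ _ _ ha hab (ih h')

lemma Rch.snoc {A : Set V} {a b c : V} {q : ℝ≥0∞} (h : Rch G w A a b q)
    (hbc : G.Adj b c) (hc : c ∈ A) : Rch G w A a c (q + w s(b, c)) := by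
  have := Rch.cons (w := w) b c c 0 h.mem_right hbc (Rch.nil c hc)
  simpa using h.trans this

lemma Rch.symm {A : Set V} {a b : V} {q : ℝ≥0∞} (h : Rch G w A a b q) :
    Rch G w A b a q := by
  induction h with
  | nil a ha => exact Rch.nil a ha
  | cons a b c q ha hab h ih =>
    have := ih.snoc hab.symm ha
    rwa [add_comm, Sym2.eq_swap] at this

lemma Rch.gdist_le {A : Set V} {a b : V} {q : ℝ≥0∞} (h : Rch G w A a b q) :
    gdist G w a b ≤ q := by
  have : ∃ p : G.Walk a b, walkWeight w p = q := by
    induction h with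
    | nil a ha => exact ⟨SimpleGraph.Walk.nil, by simp [walkWeight]⟩
    | cons a b c q ha hab h ih =>
      obtain ⟨p, hp⟩ := ih
      exact ⟨SimpleGraph.Walk.cons hab p, by simp [walkWeight, ← hp]⟩
  obtain ⟨p, rfl⟩ := this
  exact iInf_le _ p

lemma Rch.first_hit {A : Set V} {x z : V} {q : ℝ≥0∞} (h : Rch G w A x z q) (Q : V → Prop)
    (hx : ¬ Q x) (hz : Q z) : ∃ x' a q1 q2, Rch G w (A ∩ {y | ¬ Q y}) x x' q1 ∧ G.Adj x' a ∧
      Q a ∧ Rch G w A a z q2 ∧ q = q1 + w s(x', a) + q2 := by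
  induction h with
  | nil a ha => exact absurd hz hx
  | cons a b c q ha hab h ih =>
    by_cases hb : Q b
    · exact ⟨a, b, 0, q, Rch.nil a ⟨ha, hx⟩, hab, hb, h, by simp⟩
    · obtain ⟨x', a', q1, q2, h1, h2, h3, h4, h5⟩ := ih hb hz
      exact ⟨x', a', _, q2, Rch.cons _ _ _ _ ⟨ha, hx⟩ hab h1, h2, h3, h4, by
        rw [h5]; ring⟩

lemma Rch.inside {A : Set V} {b a x : V} {q : ℝ≥0∞} (h : Rch G w A a x q)
    (h0 : ∃ q, Rch G w A b a q) : Rch G w {y | ∃ q, Rch G w A b y q} a x q := by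
  induction h with
  | nil a ha => exact Rch.nil a h0
  | cons a c d q ha hab h ih =>
    exact Rch.cons _ _ _ _ h0 hab (ih ⟨_, h0.choose_spec.snoc hab h.mem_left⟩)

lemma gdist_self (a : V) : gdist G w a a = 0 :=
  le_antisymm ((Rch.nil (G := G) (w := w) (A := Set.univ) a trivial).gdist_le) (zero_le)

lemma gdist_symm (a b : V) : gdist G w a b = gdist G w b a := by
  have : ∀ a b, gdist G w a b ≤ gdist G w b a := by
    intro a b
    refine le_iInf fun p => (iInf_le _ p.reverse).trans ?_
    simp [walkWeight]
  exact le_antisymm (this _ _) (this _ _)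

lemma gdist_triangle (a b c : V) : gdist G w a c ≤ gdist G w a b + gdist G w b c := by
  unfold gdist
  rw [ENNReal.iInf_add]
  refine le_iInf fun p => ?_
  rw [ENNReal.add_iInf]
  refine le_iInf fun p' => (iInf_le _ (p.append p')).trans ?_
  simp [walkWeight]

lemma exists_min_walk {W : Type} [Finite W] (H : SimpleGraph W) (f : Sym2 W → ℝ≥0∞) (a b : W)
    (hab : Nonempty (H.Walk a b)) :
    ∃ p : H.Walk a b, (p.edges.map f).sum = ⨅ p : H.Walk a b, (p.edges.map f).sum := by
  classical
  have := Fintype.ofFinite W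
  have h1 : ∀ p : H.Walk a b, (p.bypass.edges.map f).sum ≤ (p.edges.map f).sum := by
    intro p
    exact (p.edges_bypass_sublist_edges.map f).sum_le_sum (by simp)
  have hfin : (Set.range fun p : H.Walk a b => (p.bypass.edges.map f).sum).Finite := by
    refine (Set.finite_range fun F : Finset (Sym2 W) => ∑ e ∈ F, f e).subset ?_
    rintro _ ⟨p, rfl⟩
    exact ⟨p.bypass.edges.toFinset, List.sum_toFinset f p.bypass_isPath.isTrail.edges_nodup⟩
  obtain ⟨_, ⟨p, rfl⟩, hp⟩ := hfin.exists_minimalFor id _ (Set.range_nonempty _)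
  refine ⟨p.bypass, le_antisymm (le_iInf fun p' => ?_) (iInf_le _ _)⟩
  have h2 := @hp _ ⟨p', rfl⟩
  simp only [id] at h2
  exact ((le_total _ _).elim id h2).trans (h1 p')

lemma rch_of_induce {A : Set V} {a b : A}
    (p : (G.induce A).Walk a b) :
    Rch G w A a b (p.edges.map (fun e => w (e.map Subtype.val))).sum := by
  induction p with
  | nil => exact Rch.nil _ (Subtype.coe_prop _)
  | cons h p ih =>
    simpa using Rch.cons (w := w) _ _ _ _ (Subtype.coe_prop _) h ih

lemma rch_of_setDistOn [Finite V] {A X Y : Set V} {r : ℝ}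
    (h : setDistOn G w A X Y ≤ ENNReal.ofReal r) :
    ∃ x ∈ X, ∃ y ∈ Y, ∃ q, Rch G w A x y q ∧ q ≤ ENNReal.ofReal r := by
  classical
  by_contra hcon
  push Not at hcon
  have hd : ∀ x ∈ X, ∀ y ∈ Y, ENNReal.ofReal r < distOn G w A x y := by
    intro x hx y hy
    unfold distOn
    by_cases hxA : x ∈ A
    swap
    · simp [hxA]
    by_cases hyA : y ∈ A
    swap
    · simp [hyA]
    simp only [hxA, hyA, iInf_pos]
    by_cases hne : Nonempty ((G.induce A).Walk ⟨x, hxA⟩ ⟨y, hyA⟩)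
    · obtain ⟨p, hp⟩ := exists_min_walk (G.induce A) (fun e => w (e.map Subtype.val)) _ _ hne
      rw [← hp]
      exact hcon x hx y hy _ (rch_of_induce p)
    · rw [not_nonempty_iff] at hne
      rw [iInf_of_empty]
      simp
  have hlt : ENNReal.ofReal r < setDistOn G w A X Y := by
    unfold setDistOn
    have hfin : (Set.range fun p : X × Y => distOn G w A p.1 p.2).Finite := Set.finite_range _
    by_cases hne : Nonempty (X × Y)
    · obtain ⟨p, hp⟩ := (Set.range_nonempty (fun p : X × Y => distOn G w A p.1 p.2)).csInf_mem hfin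
      refine (hd p.1 p.1.2 p.2 p.2.2).trans_le (le_iInf₂ fun a ha => le_iInf₂ fun b hb => ?_)
      simp only at hp
      rw [hp]
      exact sInf_le ⟨(⟨a, ha⟩, ⟨b, hb⟩), rfl⟩
    · have : ∀ a ∈ X, ∀ b ∈ Y, False := fun a ha b hb => hne ⟨(⟨a, ha⟩, ⟨b, hb⟩)⟩
      refine lt_of_lt_of_le ENNReal.ofReal_lt_top (le_iInf₂ fun a ha => le_iInf₂ fun b hb => ?_)
      exact (this a ha b hb).elim
  exact absurd h (not_le.2 hlt)

end basics

section order

variable (G : SimpleGraph V) (w : Sym2 V → ℝ≥0∞) [LinearOrder V]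

def SS (v : V) : Set V := {x | ∃ q, Rch G w {y | v ≤ y} v x q}

def BB (v : V) : Set V := {u | u < v ∧ ∃ x ∈ SS G w v, G.Adj x u}

variable {G w}

lemma SS_self (v : V) : v ∈ SS G w v := ⟨0, Rch.nil v (le_refl v)⟩

lemma SS_ge {v x : V} (h : x ∈ SS G w v) : v ≤ x := h.choose_spec.mem_right

lemma SS_path {v x y : V} {q : ℝ≥0∞} (h : x ∈ SS G w v) (hp : Rch G w {y | v ≤ y} x y q) :
    y ∈ SS G w v := ⟨_, h.choose_spec.trans hp⟩

lemma SS_adj {v x y : V} (h : x ∈ SS G w v) (hp : G.Adj x y) (hy : v ≤ y) :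
    y ∈ SS G w v := ⟨_, h.choose_spec.snoc hp hy⟩

lemma SS_or_BB {v x y : V} (h : x ∈ SS G w v) (hp : G.Adj x y) :
    y ∈ SS G w v ∨ y ∈ BB G w v := by
  rcases le_or_gt v y with hy | hy
  · exact Or.inl (SS_adj h hp hy)
  · exact Or.inr ⟨hy, x, h, hp⟩

lemma SS_sub {a b : V} (h : b ∈ SS G w a) : SS G w b ⊆ SS G w a := by
  rintro x ⟨q, hq⟩
  exact SS_path h (hq.mono fun y hy => (SS_ge h).trans hy)

lemma SS_nested {a b h : V} (ha : h ∈ SS G w a) (hb : h ∈ SS G w b) (hab : a ≤ b) :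
    b ∈ SS G w a := by
  obtain ⟨q, hq⟩ := hb
  exact SS_path ha (hq.symm.mono fun y hy => hab.trans hy)

/-- the static properties of a labelling -/
structure Good (G : SimpleGraph V) (w : Sym2 V → ℝ≥0∞) (half : ℝ≥0∞) (lam : V → V) : Prop where
  idem : ∀ x, lam (lam x) = lam x
  le : ∀ x, lam x ≤ x
  conn : ∀ x, ∃ q, Rch G w {y | lam y = lam x} (lam x) x q
  near : ∀ x, ∃ y ∈ insert (lam x) (BB G w (lam x)), gdist G w x y ≤ half
  far : ∀ a x, G.Adj x a → lam a < lam x →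
    ∀ y ∈ insert (lam a) (BB G w (lam a)), half < gdist G w x y

lemma exists_good [Finite V] (half : ℝ≥0∞) : ∃ lam : V → V, Good G w half lam := by
  classical
  let F : (b : V) → ((b' : V) → b' < b → Set V) → Set V := fun b D =>
    {x | b ∉ {x | ∃ b', ∃ h : b' < b, x ∈ D b' h} ∧
      ∃ q, Rch G w {x | x ∉ {x | ∃ b', ∃ h : b' < b, x ∈ D b' h} ∧
        ∃ y ∈ insert b (BB G w b), gdist G w x y ≤ half} b x q}
  have wf : WellFounded (fun a b : V => a < b) := Finite.to_wellFoundedLT.wf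
  obtain ⟨D, hD⟩ : ∃ D : V → Set V, ∀ b, D b = F b (fun b' _ => D b') :=
    ⟨wf.fix F, fun b => wf.fix_eq F b⟩
  let U : V → Set V := fun b => {x | ∃ b', b' < b ∧ x ∈ D b'}
  let N : V → Set V := fun b => {x | x ∉ U b ∧ ∃ y ∈ insert b (BB G w b), gdist G w x y ≤ half}
  have hD' : ∀ b x, x ∈ D b ↔ b ∉ U b ∧ ∃ q, Rch G w (N b) b x q := by
    intro b x
    rw [hD b]
    simp [F, U, N]
  have hself : ∀ b, b ∉ U b → b ∈ D b := by
    intro b hb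
    rw [hD']
    exact ⟨hb, 0, Rch.nil b ⟨hb, b, by simp, by simp [gdist_self]⟩⟩
  have hcov : ∀ x, ∃ b, b ≤ x ∧ x ∈ D b := by
    intro x
    by_cases hx : x ∈ U x
    · obtain ⟨b, h1, h2⟩ := hx
      exact ⟨b, h1.le, h2⟩
    · exact ⟨x, le_rfl, hself x hx⟩
  have hnU : ∀ b x, x ∈ D b → x ∉ U b := by
    intro b x hx
    obtain ⟨_, q, hq⟩ := (hD' b x).1 hx
    exact hq.mem_right.1
  have huniq : ∀ x b b', x ∈ D b → x ∈ D b' → b = b' := by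
    intro x b b' h h'
    rcases lt_trichotomy b b' with hlt | he | hlt
    · exact (hnU _ _ h' ⟨b, hlt, h⟩).elim
    · exact he
    · exact (hnU _ _ h ⟨b', hlt, h'⟩).elim
  choose lam hle hlam using hcov
  have hiff : ∀ x b, x ∈ D b ↔ lam x = b :=
    fun x b => ⟨fun h => huniq _ _ _ (hlam x) h, fun h => h ▸ hlam x⟩
  refine ⟨lam, ⟨?_, hle, ?_, ?_, ?_⟩⟩
  · intro x
    rw [← hiff]
    exact hself _ ((hD' _ _).1 (hlam x)).1
  · intro x
    obtain ⟨h0, q, hq⟩ := (hD' _ _).1 (hlam x)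
    refine ⟨q, (hq.inside ⟨0, Rch.nil _ hq.mem_left⟩).mono ?_⟩
    intro y hy
    rw [Set.mem_ofPred_eq, ← hiff, hD']
    exact ⟨h0, hy⟩
  · intro x
    obtain ⟨h0, q, hq⟩ := (hD' _ _).1 (hlam x)
    exact hq.mem_right.2
  · intro a x hadj hlt y hy
    by_contra hcon
    obtain ⟨h0, q, hq⟩ := (hD' _ _).1 (hlam a)
    have hx : x ∈ N (lam a) := by
      refine ⟨?_, y, hy, not_lt.1 hcon⟩
      rintro ⟨b', hb', hxb⟩
      rw [hiff] at hxb
      rw [hxb] at hlt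
      exact absurd hlt (not_lt.2 hb'.le)
    have : x ∈ D (lam a) := (hD' _ _).2 ⟨h0, _, hq.snoc hadj.symm hx⟩
    rw [hiff] at this
    exact absurd this hlt.ne'

variable {half : ℝ≥0∞} {lam : V → V}

def AA (G : SimpleGraph V) (w : Sym2 V → ℝ≥0∞) (lam : V → V) (v : V) : Set V := lam '' BB G w v

lemma Good.mem_SS (hg : Good G w half lam) (x : V) : x ∈ SS G w (lam x) := by
  obtain ⟨q, hq⟩ := hg.conn x
  exact ⟨q, hq.mono fun y hy => by
    have := hg.le y
    rw [Set.mem_ofPred_eq] at hy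
    rwa [hy] at this⟩

lemma Good.AA_lt (hg : Good G w half lam) {j h : V} (hj : j ∈ AA G w lam h) : j < h := by
  obtain ⟨u, hu, rfl⟩ := hj
  exact (hg.le u).trans_lt hu.1

lemma Good.alive (hg : Good G w half lam) {v x : V} (hlt : lam x < v)
    (hx : x ∈ SS G w v ∨ x ∈ BB G w v) : lam x ∈ AA G w lam v := by
  rcases hx with hx | hx
  swap
  · exact ⟨x, hx, rfl⟩
  obtain ⟨q, hq⟩ := hg.conn x
  obtain ⟨x', a, q1, q2, h1, h2, h3, h4, -⟩ := hq.symm.first_hit (fun y => y ∉ SS G w v)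
    (by simpa using hx) (fun h => absurd (SS_ge h) (not_le.2 hlt))
  have hx' : x' ∈ SS G w v := by simpa using h1.mem_right.2
  rcases SS_or_BB hx' h2 with h | h
  · exact absurd h h3
  · exact ⟨a, h, h4.mem_left⟩

lemma Good.persist (hg : Good G w half lam) {j b v : V} (hj : j ∈ AA G w lam b) (hjv : j < v)
    (hb : b ∈ SS G w v) : j ∈ AA G w lam v := by
  obtain ⟨u, ⟨hu, x, hx, hadj⟩, rfl⟩ := hj
  exact hg.alive hjv (SS_or_BB (SS_sub hb hx) hadj)

lemma Good.mem_of_AA (hg : Good G w half lam) {j h : V} (hj : j ∈ AA G w lam h) :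
    h ∈ SS G w j := by
  have hlt := hg.AA_lt hj
  obtain ⟨u, ⟨hu, x, hx, hadj⟩, rfl⟩ := hj
  have h1 : x ∈ SS G w (lam u) := SS_adj (hg.mem_SS u) hadj.symm (hlt.le.trans (SS_ge hx))
  exact SS_nested h1 hx hlt.le

lemma Good.step (hg : Good G w half lam) {h x z : V} {q : ℝ≥0∞} (hx : x ∈ SS G w h)
    (hlx : h ≤ lam x) (hp : Rch G w {y | lam z ≤ lam y} x z q) (hz : lam z < h) :
    ∃ b ∈ AA G w lam h, lam z ≤ b ∧ (lam z = b ∨ lam z ∈ AA G w lam b ∨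
      ∃ y' ∈ BB G w b, ∃ q' c, Rch G w {y | lam z ≤ lam y} y' z q' ∧ half < c ∧ c + q' ≤ q) := by
  obtain ⟨x', a, q1, q2, h1, h2, h3, h4, h5⟩ := hp.first_hit (fun y => lam y < h)
    (not_lt.2 hlx) hz
  have hx' : x' ∈ SS G w h := SS_path hx (h1.mono fun y hy => (not_lt.1 hy.2).trans (hg.le y))
  have hb : lam a ∈ AA G w lam h := hg.alive h3 (SS_or_BB hx' h2)
  have hza : lam z ≤ lam a := h4.mem_left
  refine ⟨lam a, hb, hza, ?_⟩
  by_cases e1 : lam z = lam a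
  · exact Or.inl e1
  by_cases e2 : lam z ∈ AA G w lam (lam a)
  · exact Or.inr (Or.inl e2)
  refine Or.inr (Or.inr ?_)
  have hza' := lt_of_le_of_ne hza e1
  obtain ⟨y0, y', q3, q4, g1, g2, g3, g4, g5⟩ := h4.first_hit (fun y => y ∉ SS G w (lam a))
    (by simpa using hg.mem_SS a) (fun hh => e2 (hg.alive hza' (Or.inl hh)))
  have hy0 : y0 ∈ SS G w (lam a) := by simpa using g1.mem_right.2
  have hy' : y' ∈ BB G w (lam a) := (SS_or_BB hy0 g2).resolve_left g3
  refine ⟨y', hy', q4, w s(x', a) + (q3 + w s(y0, y')), g4, ?_, ?_⟩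
  · have hlt : lam a < lam x' := h3.trans_le (not_lt.1 h1.mem_right.2)
    refine (hg.far a x' h2 hlt y' (Or.inr hy')).trans_le ?_
    have g1' : Rch G w Set.univ a y0 q3 := g1.mono (Set.subset_univ _)
    exact (Rch.cons (A := Set.univ) _ _ _ _ trivial h2 (g1'.snoc g2 trivial)).gdist_le
  · rw [h5, g5]
    calc _ = w s(x', a) + (q3 + w s(y0, y') + q4) := by ring
      _ ≤ q1 + (w s(x', a) + (q3 + w s(y0, y') + q4)) := le_add_self
      _ = _ := by ring



def Tgt (G : SimpleGraph V) (w : Sym2 V → ℝ≥0∞) (half : ℝ≥0∞) (lam : V → V)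
    (i : WithBot V) (h : V) (N : ℕ) : Set V :=
  {j | i < (j : WithBot V) ∧ j < h ∧ ∃ x z q, x ∈ SS G w h ∧ h ≤ lam x ∧
    Rch G w {y | lam z ≤ lam y} x z q ∧ lam z = j ∧ q ≤ (N + 1) * half}

lemma gain_zero {half c q' q : ℝ≥0∞} (h1 : half < c) (h2 : c + q' ≤ q)
    (h3 : q ≤ ((0 : ℕ) + 1) * half) : False := by
  have : c ≤ half := by
    calc c ≤ c + q' := le_self_add
      _ ≤ _ := h2.trans h3
      _ = half := by simp
  exact absurd h1 (not_lt.2 this)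

lemma gain_succ {half c q' q : ℝ≥0∞} {N : ℕ} (hh : half ≠ ⊤) (h1 : half < c) (h2 : c + q' ≤ q)
    (h3 : q ≤ ((N + 1 : ℕ) + 1) * half) : q' ≤ (N + 1) * half := by
  have : half + q' ≤ half + (N + 1) * half := by
    calc half + q' ≤ c + q' := by gcongr
      _ ≤ _ := h2.trans h3
      _ = _ := by push_cast; ring
  exact (ENNReal.add_le_add_iff_left hh).1 this

lemma Good.mem_SS_of_BB (hg : Good G w half lam) {b c y : V} (hy : y ∈ BB G w b)
    (hb : b ∈ SS G w c) (hc : c ≤ lam y) : y ∈ SS G w c := by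
  obtain ⟨hu, x, hx, hadj⟩ := hy
  exact SS_adj (SS_sub hb hx) hadj (hc.trans (hg.le y))

lemma Good.Tgt_empty (hg : Good G w half lam) {i : WithBot V} {h : V} {N : ℕ}
    (hA : ∀ j ∈ AA G w lam h, ¬ i < (j : WithBot V)) : Tgt G w half lam i h N = ∅ := by
  rw [Set.eq_empty_iff_forall_notMem]
  rintro j ⟨hij, hjh, x, z, q, hx, hlx, hp, rfl, hq⟩
  obtain ⟨b, hb, hzb, -⟩ := hg.step hx hlx hp hjh
  exact hA b hb (hij.trans_le (WithBot.coe_le_coe.2 hzb))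

lemma Good.Tgt_sub (hg : Good G w half lam) (hh : half ≠ ⊤) {i : WithBot V} {h h1 h2 : V} {N : ℕ}
    (a1 : h1 ∈ AA G w lam h) (m1 : ∀ j ∈ AA G w lam h, i < (j : WithBot V) → h1 ≤ j)
    (a2 : h2 ∈ AA G w lam h1) (m2 : ∀ j ∈ AA G w lam h1, i < (j : WithBot V) → h2 ≤ j)
    {j : V} (hj : j ∈ Tgt G w half lam i h N) (hj2 : j < h2) :
    ∃ N', N = N' + 1 ∧ j ∈ Tgt G w half lam i h2 N' := by
  obtain ⟨hij, hjh, x, z, q, hx, hlx, hp, rfl, hq⟩ := hj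
  have h21 := hg.AA_lt a2
  obtain ⟨b, hb, hzb, hor⟩ := hg.step hx hlx hp hjh
  have hb1 : h1 ≤ b := m1 b hb (hij.trans_le (WithBot.coe_le_coe.2 hzb))
  have hbS : b ∈ SS G w h1 := SS_nested (hg.mem_of_AA a1) (hg.mem_of_AA hb) hb1
  have hkey : ∀ c ∈ AA G w lam b, i < (c : WithBot V) → h2 ≤ c := by
    intro c hc hic
    by_contra hcon
    rw [not_le] at hcon
    exact absurd (m2 c (hg.persist hc (hcon.trans h21) hbS) hic) (not_le.2 hcon)
  rcases hor with e | e | ⟨y', hy', q', c, hp', hc, hcq⟩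
  · exact absurd (e ▸ hb1) (not_le.2 (hj2.trans h21))
  · exact absurd (hkey _ e hij) (not_le.2 hj2)
  · have hz : lam z ≤ lam y' := hp'.mem_left
    have h2y := hkey _ ⟨y', hy', rfl⟩ (hij.trans_le (WithBot.coe_le_coe.2 hz))
    have hyS : y' ∈ SS G w h2 := hg.mem_SS_of_BB hy' (SS_sub (hg.mem_of_AA a2) hbS) h2y
    rcases N with _ | N'
    · exact (gain_zero hc hcq hq).elim
    · exact ⟨N', rfl, hij, hj2, y', z, q', hyS, h2y, hp', rfl, gain_succ hh hc hcq hq⟩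

def Width (G : SimpleGraph V) (w : Sym2 V → ℝ≥0∞) (lam : V → V)
    (i : WithBot V) (h : V) (s : ℕ) : Prop :=
  ∀ v, h ∈ SS G w v → (AA G w lam v ∩ {j | i < (j : WithBot V)}).ncard ≤ s

lemma Good.Width_sub (hg : Good G w half lam) {i : WithBot V} {h h1 : V} {s : ℕ}
    (hW : Width G w lam i h s) (a1 : h1 ∈ AA G w lam h) : Width G w lam i h1 s :=
  fun v hv => hW v (SS_sub hv (hg.mem_of_AA a1))

lemma Good.Width_pred [Finite V] (hg : Good G w half lam) {i : WithBot V} {h h1 : V} {s : ℕ}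
    (hW : Width G w lam i h (s + 1)) (a1 : h1 ∈ AA G w lam h) (hi : i < (h1 : WithBot V)) :
    Width G w lam (h1 : WithBot V) h s := by
  intro v hv
  rcases le_or_gt v h1 with hle | hlt
  · have : AA G w lam v ∩ {j | (h1 : WithBot V) < (j : WithBot V)} = ∅ := by
      rw [Set.eq_empty_iff_forall_notMem]
      rintro j ⟨hj, hj'⟩
      have h3 : h1 < j := WithBot.coe_lt_coe.1 hj'
      exact absurd ((hg.AA_lt hj).trans_le hle) (not_lt.2 h3.le)
    rw [this, Set.ncard_empty]
    exact Nat.zero_le _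
  · have h1v : h1 ∈ AA G w lam v := hg.persist a1 hlt hv
    have hsub : AA G w lam v ∩ {j | (h1 : WithBot V) < (j : WithBot V)} ⊂
        AA G w lam v ∩ {j | i < (j : WithBot V)} := by
      rw [Set.ssubset_iff_of_subset]
      · exact ⟨h1, ⟨h1v, hi⟩, fun hh => lt_irrefl (h1 : WithBot V) hh.2⟩
      · rintro j ⟨hj, hj'⟩
        exact ⟨hj, hi.trans hj'⟩
    have := Set.ncard_lt_ncard hsub (Set.toFinite _)
    have := hW v hv
    omega

lemma exists_min_set [Finite V] {A : Set V} (hA : A.Nonempty) : ∃ a ∈ A, ∀ b ∈ A, a ≤ b :=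
  Set.exists_min_image A id (Set.toFinite A) hA

lemma Good.core [Finite V] (hg : Good G w half lam) (hh : half ≠ ⊤) {s N F : ℕ}
    {i : WithBot V} {h : V} (hW : Width G w lam i h (s + 1)) (hF : 1 ≤ F)
    (ih : ∀ (i : WithBot V) (h : V), Width G w lam i h s →
      1 + (Tgt G w half lam i h N).ncard ≤ F) :
    ∃ h2, Width G w lam i h2 (s + 1) ∧ 1 + (Tgt G w half lam i h N).ncard ≤
      2 * F + 1 + {j | ∃ N', N = N' + 1 ∧ j ∈ Tgt G w half lam i h2 N'}.ncard := by
  by_cases e1 : (AA G w lam h ∩ {j | i < (j : WithBot V)}).Nonempty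
  swap
  · refine ⟨h, hW, ?_⟩
    rw [hg.Tgt_empty]
    · rw [Set.ncard_empty]; omega
    · exact fun j hj hij => e1 ⟨j, hj, hij⟩
  obtain ⟨h1, ⟨a1, i1⟩, m1⟩ := exists_min_set e1
  have b1 := ih _ _ (hg.Width_pred hW a1 i1)
  have W1 := hg.Width_sub hW a1
  have hlt1 := hg.AA_lt a1
  have hdown : ∀ j ∈ Tgt G w half lam i h N, j < h1 → j ∈ Tgt G w half lam i h1 N := by
    rintro j ⟨hij, hjh, x, z, q, hx, hlx, hp, rfl, hq⟩ hj1
    exact ⟨hij, hj1, x, z, q, SS_sub (hg.mem_of_AA a1) hx, hlt1.le.trans hlx, hp, rfl, hq⟩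
  have hup : ∀ j ∈ Tgt G w half lam i h N, h1 < j → j ∈ Tgt G w half lam h1 h N := by
    rintro j ⟨hij, hj⟩ hj1
    exact ⟨WithBot.coe_lt_coe.2 hj1, hj⟩
  by_cases e2 : (AA G w lam h1 ∩ {j | i < (j : WithBot V)}).Nonempty
  swap
  · refine ⟨h, hW, ?_⟩
    have hsub : Tgt G w half lam i h N ⊆ {h1} ∪ Tgt G w half lam h1 h N := by
      intro j hj
      rcases lt_trichotomy j h1 with hlt | he | hlt
      · have := hdown j hj hlt
        rw [hg.Tgt_empty] at this
        · exact this.elim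
        · exact fun j hj hij => e2 ⟨j, hj, hij⟩
      · exact Or.inl he
      · exact Or.inr (hup j hj hlt)
    have c1 := Set.ncard_le_ncard hsub (Set.toFinite _)
    have c2 := Set.ncard_union_le {h1} (Tgt G w half lam h1 h N)
    rw [Set.ncard_singleton] at c2
    omega
  obtain ⟨h2, ⟨a2, i2⟩, m2⟩ := exists_min_set e2
  have b2 := ih _ _ (hg.Width_pred W1 a2 i2)
  have W2 := hg.Width_sub W1 a2
  refine ⟨h2, W2, ?_⟩
  have hsub : Tgt G w half lam i h N ⊆ ({h1, h2} ∪ Tgt G w half lam h1 h N) ∪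
      (Tgt G w half lam h2 h1 N ∪
        {j | ∃ N', N = N' + 1 ∧ j ∈ Tgt G w half lam i h2 N'}) := by
    intro j hj
    rcases lt_trichotomy j h1 with hlt | he | hlt
    · have hd := hdown j hj hlt
      rcases lt_trichotomy j h2 with hlt2 | he2 | hlt2
      · exact Or.inr (Or.inr (hg.Tgt_sub hh a1 (fun j h h' => m1 j ⟨h, h'⟩) a2
          (fun j h h' => m2 j ⟨h, h'⟩) hj hlt2))
      · exact Or.inl (Or.inl (Or.inr he2))
      · exact Or.inr (Or.inl ⟨WithBot.coe_lt_coe.2 hlt2, hd.2⟩)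
    · exact Or.inl (Or.inl (Or.inl he))
    · exact Or.inl (Or.inr (hup j hj hlt))
  have c1 := Set.ncard_le_ncard hsub (Set.toFinite _)
  have c2 := Set.ncard_union_le ({h1, h2} ∪ Tgt G w half lam h1 h N) (Tgt G w half lam h2 h1 N ∪
        {j | ∃ N', N = N' + 1 ∧ j ∈ Tgt G w half lam i h2 N'})
  have c3 := Set.ncard_union_le {h1, h2} (Tgt G w half lam h1 h N)
  have c4 := Set.ncard_union_le (Tgt G w half lam h2 h1 N)
        {j | ∃ N', N = N' + 1 ∧ j ∈ Tgt G w half lam i h2 N'}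
  have c5 : ({h1, h2} : Set V).ncard ≤ 2 := by
    have := Set.ncard_insert_le h1 {h2}
    rwa [Set.ncard_singleton] at this
  omega

lemma Good.bound1 [Finite V] (hg : Good G w half lam) (hh : half ≠ ⊤) :
    ∀ (s N : ℕ) (i : WithBot V) (h : V), Width G w lam i h s →
      1 + (Tgt G w half lam i h N).ncard ≤ 2 ^ s * (s + N + 1).choose s := by
  intro s
  induction s with
  | zero =>
    intro N i h hW
    rw [hg.Tgt_empty]
    · simp
    · intro j hj hij
      have := hW h (SS_self h)
      rw [Nat.le_zero, Set.ncard_eq_zero (Set.toFinite _)] at this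
      exact Set.notMem_empty j (this ▸ (⟨hj, hij⟩ : j ∈ AA G w lam h ∩ {j | i < (j : WithBot V)}))
  | succ s ihs =>
    have hpos : ∀ N, 1 ≤ 2 ^ s * (s + N + 1).choose s := by
      intro N
      exact Nat.mul_pos (by positivity) (Nat.choose_pos (by omega))
    have hpas : ∀ N, 2 ^ (s + 1) * (s + 1 + N + 1).choose (s + 1) =
        2 * (2 ^ s * (s + N + 1).choose s) + 2 ^ (s + 1) * (s + 1 + N).choose (s + 1) := by
      intro N
      rw [Nat.choose_succ_succ, show s + N + 1 = s + 1 + N by ring]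
      ring
    intro N
    induction N with
    | zero =>
      intro i h hW
      obtain ⟨h2, hW2, hb⟩ := hg.core hh hW (hpos 0) (ihs 0)
      have : {j | ∃ N', 0 = N' + 1 ∧ j ∈ Tgt G w half lam i h2 N'} = ∅ := by
        ext j; simp
      rw [this, Set.ncard_empty] at hb
      have h3 := hpas 0
      have h4 : 1 ≤ 2 ^ (s + 1) * (s + 1 + 0).choose (s + 1) :=
        Nat.mul_pos (by positivity) (Nat.choose_pos (by omega))
      omega
    | succ N ihN =>
      intro i h hW
      obtain ⟨h2, hW2, hb⟩ := hg.core hh hW (hpos (N + 1)) (ihs (N + 1))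
      have : {j | ∃ N', N + 1 = N' + 1 ∧ j ∈ Tgt G w half lam i h2 N'} =
          Tgt G w half lam i h2 N := by
        ext j
        constructor
        · rintro ⟨N', hN, hj⟩
          obtain rfl : N = N' := by omega
          exact hj
        · exact fun hj => ⟨N, rfl, hj⟩
      rw [this] at hb
      have := ihN i h2 hW2
      rw [hpas]
      have e : s + 1 + (N + 1) = s + 1 + N + 1 := by ring
      rw [e]
      omega

lemma ncard_biUnion_le {α β : Type} [Finite α] [Finite β] (A : Set α) (f : α → Set β) (m : ℕ)
    (h : ∀ a ∈ A, (f a).ncard ≤ m) : (⋃ a ∈ A, f a).ncard ≤ A.ncard * m := by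
  classical
  have := Fintype.ofFinite α
  have := Fintype.ofFinite β
  have e : (⋃ a ∈ A, f a) = ((A.toFinset.biUnion fun a => (f a).toFinset : Finset β) : Set β) := by
    ext; simp
  rw [e, Set.ncard_coe_finset, Set.ncard_eq_toFinset_card']
  refine Finset.card_biUnion_le_card_mul _ _ _ fun a ha => ?_
  rw [← Set.ncard_eq_toFinset_card']
  exact h a (by simpa using ha)

lemma Good.bound2 [Finite V] (hg : Good G w half lam) (hh : half ≠ ⊤) (k : ℕ)
    (hk : ∀ v, (AA G w lam v).ncard ≤ k) (N : ℕ) :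
    ∀ (h : V), 1 + (Tgt G w half lam ⊥ h N).ncard ≤ (k + 1) ^ (2 * (N + 1)) := by
  have main : ∀ N h M, (∀ c, {j | ∃ N', N = N' + 1 ∧ j ∈ Tgt G w half lam ⊥ c N'}.ncard ≤ M) →
      1 + (Tgt G w half lam ⊥ h N).ncard ≤ 1 + (k + k * (k + k * M)) := by
    intro N h M hM
    have hsub : Tgt G w half lam ⊥ h N ⊆ AA G w lam h ∪ ⋃ b ∈ AA G w lam h,
        (AA G w lam b ∪ ⋃ c ∈ AA G w lam b,
          {j | ∃ N', N = N' + 1 ∧ j ∈ Tgt G w half lam ⊥ c N'}) := by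
      rintro j ⟨hij, hjh, x, z, q, hx, hlx, hp, rfl, hq⟩
      obtain ⟨b, hb, hzb, hor⟩ := hg.step hx hlx hp hjh
      rcases hor with e | e | ⟨y', hy', q', c, hp', hc, hcq⟩
      · exact Or.inl (e ▸ hb)
      · exact Or.inr (Set.mem_biUnion hb (Or.inl e))
      · refine Or.inr (Set.mem_biUnion hb ?_)
        have hya : lam y' ∈ AA G w lam b := ⟨y', hy', rfl⟩
        rcases eq_or_lt_of_le (show lam z ≤ lam y' from hp'.mem_left) with he | hlt
        · exact Or.inl (he ▸ hya)
        · refine Or.inr (Set.mem_biUnion hya ?_)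
          rcases N with _ | N'
          · exact (gain_zero hc hcq hq).elim
          · exact ⟨N', rfl, hij, hlt, y', z, q', hg.mem_SS y', le_rfl, hp', rfl,
              gain_succ hh hc hcq hq⟩
    have c1 := Set.ncard_le_ncard hsub (Set.toFinite _)
    have c2 := Set.ncard_union_le (AA G w lam h) (⋃ b ∈ AA G w lam h,
        (AA G w lam b ∪ ⋃ c ∈ AA G w lam b,
          {j | ∃ N', N = N' + 1 ∧ j ∈ Tgt G w half lam ⊥ c N'}))
    have c3 := ncard_biUnion_le (AA G w lam h) (fun b => AA G w lam b ∪ ⋃ c ∈ AA G w lam b,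
          {j | ∃ N', N = N' + 1 ∧ j ∈ Tgt G w half lam ⊥ c N'}) (k + k * M) (by
        intro b hb
        refine (Set.ncard_union_le _ _).trans (add_le_add (hk b) ?_)
        exact (ncard_biUnion_le _ _ M fun c _ => hM c).trans (Nat.mul_le_mul_right _ (hk b)))
    have c4 := Nat.mul_le_mul_right (k + k * M) (hk h)
    have := hk h
    omega
  induction N with
  | zero =>
    intro h
    refine (main 0 h 0 ?_).trans ?_
    · intro c; simp
    · ring_nf; nlinarith
  | succ N ih =>
    intro h
    have hp : 1 ≤ (k + 1) ^ (2 * (N + 1)) := Nat.one_le_pow _ _ (by omega)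
    refine (main (N + 1) h ((k + 1) ^ (2 * (N + 1)) - 1) ?_).trans ?_
    · intro c
      have : {j | ∃ N', N + 1 = N' + 1 ∧ j ∈ Tgt G w half lam ⊥ c N'} =
          Tgt G w half lam ⊥ c N := by
        ext j
        constructor
        · rintro ⟨N', hN, hj⟩
          obtain rfl : N = N' := by omega
          exact hj
        · exact fun hj => ⟨N, rfl, hj⟩
      rw [this]
      have := ih c
      omega
    · rw [show 2 * (N + 1 + 1) = 2 * (N + 1) + 2 by ring, pow_add]
      generalize (k + 1) ^ (2 * (N + 1)) = Q at *
      obtain ⟨m, rfl⟩ : ∃ m, Q = m + 1 := ⟨Q - 1, by omega⟩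
      simp only [Nat.add_sub_cancel]
      nlinarith [Nat.zero_le (m * k), Nat.zero_le m]

end order

lemma main_of_order [Finite V] [LinearOrder V] (G : SimpleGraph V) (w : Sym2 V → ℝ≥0∞)
    (ρ : ℝ) (hρ : 0 < ρ) (k : ℕ) (hk : ∀ v, (insert v (BB G w v)).ncard ≤ k) :
    ∃ (P : Set (Set V)) (le : Set V → Set V → Prop),
      Setoid.IsPartition P ∧
      (∀ X ∈ P, ∀ u ∈ X, ∀ v ∈ X, gdist G w u v ≤ ENNReal.ofReal ρ) ∧
      IsLinearOrderOn P le ∧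
      ∀ r : ℝ, ρ < r →
        wcol G w P le r ≤
          min (k * 2 ^ k * (k + ⌈2 * r / ρ⌉₊).choose k)
            ((2 * ⌈2 * r / ρ⌉₊ + k + 1) ^ (3 * ⌈2 * r / ρ⌉₊ + 4)) := by
  classical
  set half : ℝ≥0∞ := ENNReal.ofReal (ρ / 2) with hhalf
  have hh : half ≠ ⊤ := ENNReal.ofReal_ne_top
  obtain ⟨lam, hg⟩ := exists_good (G := G) (w := w) half
  choose cen hcen hcd using hg.near
  let φ : V → V ×ₗ V := fun x => toLex (lam x, cen x)
  have φ1 : ∀ x y, φ x ≤ φ y → lam x ≤ lam y := by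
    intro x y h
    rw [Prod.Lex.toLex_le_toLex] at h
    rcases h with h | h
    · exact h.le
    · exact h.1.le
  have φ2 : ∀ x y, φ x = φ y → lam x = lam y ∧ cen x = cen y := by
    intro x y h
    have h' : (lam x, cen x) = (lam y, cen y) := toLex.injective h
    simpa using h'
  let P : Set (Set V) := Set.range fun x => {y | φ y = φ x}
  let le : Set V → Set V → Prop := fun X Y => ∃ x ∈ X, ∃ y ∈ Y, φ x ≤ φ y
  have hP : ∀ X ∈ P, ∀ x ∈ X, X = {y | φ y = φ x} := by
    rintro _ ⟨x0, rfl⟩ x hx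
    have hx' : φ x = φ x0 := hx
    simp only [hx']
  have hle : ∀ X ∈ P, ∀ Y ∈ P, ∀ x ∈ X, ∀ y ∈ Y, le X Y → φ x ≤ φ y := by
    rintro _ ⟨x0, rfl⟩ _ ⟨y0, rfl⟩ x hx y hy ⟨x1, hx1, y1, hy1, h⟩
    have e1 : φ x = φ x0 := hx
    have e2 : φ y = φ y0 := hy
    have e3 : φ x1 = φ x0 := hx1
    have e4 : φ y1 = φ y0 := hy1
    rw [e1, e2, ← e3, ← e4]
    exact h
  have hne : ∀ X ∈ P, ∃ x, x ∈ X := by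
    rintro _ ⟨x0, rfl⟩
    exact ⟨x0, rfl⟩
  refine ⟨P, le, ?_, ?_, ?_, ?_⟩
  · refine ⟨?_, ?_⟩
    · intro h
      obtain ⟨x, hx⟩ := hne _ h
      exact hx
    · intro a
      refine ⟨{y | φ y = φ a}, ⟨⟨a, rfl⟩, rfl⟩, ?_⟩
      rintro Y ⟨hY, ha⟩
      exact hP Y hY a ha
  · rintro _ ⟨x0, rfl⟩ u hu v hv
    obtain ⟨-, e1⟩ := φ2 _ _ hu
    obtain ⟨-, e2⟩ := φ2 _ _ hv
    refine (gdist_triangle u (cen x0) v).trans ?_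
    have h1 := hcd u
    have h2 := hcd v
    rw [e1] at h1
    rw [e2, gdist_symm] at h2
    refine (add_le_add h1 h2).trans ?_
    rw [hhalf, ← ENNReal.ofReal_add (by positivity) (by positivity)]
    simp
  · refine ⟨?_, ?_, ?_, ?_⟩
    · intro X hX
      obtain ⟨x, hx⟩ := hne X hX
      exact ⟨x, hx, x, hx, le_rfl⟩
    · intro X hX Y hY h1 h2
      obtain ⟨x, hx⟩ := hne X hX
      obtain ⟨y, hy⟩ := hne Y hY
      have e := le_antisymm (hle X hX Y hY x hx y hy h1) (hle Y hY X hX y hy x hx h2)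
      rw [hP X hX x hx, hP Y hY y hy, e]
    · intro X hX Y hY Z hZ h1 h2
      obtain ⟨x, hx⟩ := hne X hX
      obtain ⟨y, hy⟩ := hne Y hY
      obtain ⟨z, hz⟩ := hne Z hZ
      exact ⟨x, hx, z, hz, (hle X hX Y hY x hx y hy h1).trans (hle Y hY Z hZ y hy z hz h2)⟩
    · intro X hX Y hY
      obtain ⟨x, hx⟩ := hne X hX
      obtain ⟨y, hy⟩ := hne Y hY
      rcases le_total (φ x) (φ y) with h | h
      · exact Or.inl ⟨x, hx, y, hy, h⟩
      · exact Or.inr ⟨y, hy, x, hx, h⟩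
  · intro r hr
    set R := ⌈2 * r / ρ⌉₊ with hR
    have hRpos : 0 < R := by
      rw [hR, Nat.ceil_pos]
      have : 0 < r := hρ.trans hr
      positivity
    obtain ⟨N, hN⟩ : ∃ N, R = N + 1 := ⟨R - 1, by omega⟩
    have hrR : ENNReal.ofReal r ≤ (N + 1) * half := by
      have e : ((N : ℝ≥0∞) + 1) = ENNReal.ofReal ((N : ℝ) + 1) := by
        rw [ENNReal.ofReal_add (by positivity) (by positivity)]
        simp
      rw [e, hhalf, ← ENNReal.ofReal_mul (by positivity)]
      apply ENNReal.ofReal_le_ofReal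
      have h1 : 2 * r / ρ ≤ (R : ℝ) := Nat.le_ceil _
      rw [hN, div_le_iff₀ hρ] at h1
      push_cast at h1
      linarith
    have hAk : ∀ v, (AA G w lam v).ncard ≤ k := fun v =>
      (Set.ncard_image_le (Set.toFinite _)).trans
        ((Set.ncard_le_ncard (Set.subset_insert _ _) (Set.toFinite _)).trans (hk v))
    have hX : ∀ X ∈ P, {Y | Y ∈ P ∧ WReach G w P le r X Y}.ncard ≤
          min (k * 2 ^ k * (k + R).choose k)
            ((2 * R + k + 1) ^ (3 * R + 4)) := by
      intro X hX
      obtain ⟨x0, hx0⟩ := hne X hX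
      have hsub : {Y | Y ∈ P ∧ WReach G w P le r X Y} ⊆
          ⋃ b ∈ insert (lam x0) (Tgt G w half lam ⊥ (lam x0) N),
            ⋃ c ∈ insert b (BB G w b), {{y | φ y = toLex (b, c)}} := by
        rintro Y ⟨hY, hW⟩
        obtain ⟨x, hx, y, hy, q, hp, hq⟩ := rch_of_setDistOn hW
        have hp' : Rch G w {u | lam y ≤ lam u} x y q := by
          refine hp.mono ?_
          rintro u ⟨Z, ⟨hZ, hYZ⟩, hu⟩
          exact φ1 _ _ (hle Y hY Z hZ y hy u hu hYZ)
        have hxx : lam x = lam x0 := by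
          have h1 := hP X hX x0 hx0
          rw [h1] at hx
          exact (φ2 _ _ hx).1
        refine Set.mem_biUnion (x := lam y) ?_ (Set.mem_biUnion (hcen y) ?_)
        · have h1 : lam y ≤ lam x := hp'.mem_left
          rcases eq_or_lt_of_le h1 with he | hlt
          · exact Or.inl (he.trans hxx)
          · rw [← hxx]
            exact Or.inr ⟨WithBot.bot_lt_coe _, hlt, x, y, q, hg.mem_SS x, le_rfl, hp', rfl,
              hq.trans hrR⟩
        · exact hP Y hY y hy
      have c1 := Set.ncard_le_ncard hsub (Set.toFinite _)
      have c2 := ncard_biUnion_le (insert (lam x0) (Tgt G w half lam ⊥ (lam x0) N))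
        (fun b => ⋃ c ∈ insert b (BB G w b), {{y | φ y = toLex (b, c)}}) k (by
          intro b _
          refine (ncard_biUnion_le _ _ 1 ?_).trans ?_
          · intro c _
            rw [Set.ncard_singleton]
          · rw [mul_one]
            exact hk b)
      have c3 := Set.ncard_insert_le (lam x0) (Tgt G w half lam ⊥ (lam x0) N)
      have c4 := (c1.trans c2).trans (Nat.mul_le_mul_right k c3)
      refine c4.trans (le_min ?_ ?_)
      · have hb := hg.bound1 hh k N ⊥ (lam x0) (fun v _ =>
          (Set.ncard_le_ncard Set.inter_subset_left (Set.toFinite _)).trans (hAk v))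
        rw [add_comm] at hb
        refine (Nat.mul_le_mul_right k hb).trans (le_of_eq ?_)
        rw [hN, add_assoc k N 1]
        ring
      · have hb := hg.bound2 hh k hAk N (lam x0)
        rw [add_comm, ← hN] at hb
        refine (Nat.mul_le_mul_right k hb).trans ?_
        calc (k + 1) ^ (2 * R) * k ≤ (k + 1) ^ (2 * R) * (k + 1) := by gcongr; omega
          _ = (k + 1) ^ (2 * R + 1) := (pow_succ _ _).symm
          _ ≤ (2 * R + k + 1) ^ (2 * R + 1) := Nat.pow_le_pow_left (by omega) _
          _ ≤ _ := Nat.pow_le_pow_right (by omega) (by omega)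
    unfold wcol
    refine ciSup_le' fun X => ?_
    by_cases h : X ∈ P
    · exact ciSup_le' fun _ => hX X h
    · exact ciSup_le' fun h' => (h h').elim

section tree

variable {ι : Type} {T : SimpleGraph ι}

def below (T : SimpleGraph ι) (r s t : ι) : Prop := ∀ p : T.Walk r t, s ∈ p.support

lemma below_step {r s t t' : ι} (h : below T r s t) (hadj : T.Adj t t') (h1 : s ≠ t)
    (h2 : s ≠ t') : below T r s t' := by
  intro p
  have := h (p.append (SimpleGraph.Walk.cons hadj.symm SimpleGraph.Walk.nil))
  rw [SimpleGraph.Walk.mem_support_append_iff] at this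
  simpa [h1, h2] using this

lemma below_walk {r s : ι} {C : Set ι} (hs : s ∉ C) {a b : C} (p : (T.induce C).Walk a b)
    (h : below T r s a) : below T r s b := by
  induction p with
  | nil => exact h
  | cons hadj p ih =>
    exact ih (below_step h hadj (fun e => hs (e ▸ Subtype.coe_prop _))
      (fun e => hs (e ▸ Subtype.coe_prop _)))

lemma dist_lt_of_mem {r s t : ι} (p : T.Walk r t) (hp : p.length = T.dist r t)
    (hs : s ∈ p.support) (hne : s ≠ t) : T.dist r s < T.dist r t := by
  classical
  have h1 := congrArg SimpleGraph.Walk.length (p.take_spec hs)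
  rw [SimpleGraph.Walk.length_append] at h1
  have h2 := SimpleGraph.dist_le (p.takeUntil s hs)
  have h3 : (p.dropUntil s hs).length ≠ 0 := fun h => hne (SimpleGraph.Walk.eq_of_length_eq_zero h)
  omega

lemma below_dist (hT : T.IsTree) {r s t : ι} (h : below T r s t) (hne : s ≠ t) :
    T.dist r s < T.dist r t := by
  obtain ⟨p, hp⟩ := hT.connected.exists_walk_length_eq_dist r t
  exact dist_lt_of_mem p hp (h p) hne

lemma top_walk (hT : T.IsTree) {r s : ι} {C : Set ι} (hmin : ∀ t ∈ C, T.dist r s ≤ T.dist r t)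
    {a b : C} (p : (T.induce C).Walk a b)
    (h : below T r s a) : below T r s b := by
  induction p with
  | nil => exact h
  | @cons u v x hadj p ih =>
    refine ih ?_
    have hadj' : T.Adj u v := hadj
    by_cases h2 : s = v
    · rw [← h2]
      exact fun p => p.end_mem_support
    by_cases h1 : s = u
    swap
    · exact below_step h hadj h1 h2
    by_contra hcon
    unfold below at hcon
    push Not at hcon
    obtain ⟨p1, hp1⟩ := hcon
    obtain ⟨p0, hp0⟩ := hT.connected.exists_walk_length_eq_dist r (u : ι)
    have hb := SimpleGraph.isAcyclic_iff_forall_adj_isBridge.1 hT.isAcyclic hadj'.symm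
    rw [SimpleGraph.isBridge_iff_forall_walk_mem_edges] at hb
    have := hb (p1.reverse.append p0)
    rw [SimpleGraph.Walk.edges_append, List.mem_append, SimpleGraph.Walk.edges_reverse,
      List.mem_reverse] at this
    rcases this with h | h
    · exact hp1 (h1 ▸ SimpleGraph.Walk.snd_mem_support_of_mem_edges _ h)
    · have h3 := dist_lt_of_mem p0 hp0 (SimpleGraph.Walk.fst_mem_support_of_mem_edges _ h)
        (fun e => h2 (h1.trans e.symm))
      have h4 := hmin v v.2
      rw [h1] at h4
      omega

lemma exists_order [Finite V] (G : SimpleGraph V) (w : Sym2 V → ℝ≥0∞) (k : ℕ) (bag : ι → Set V)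
    (htd : IsTreeDecompOf G T bag) (hbag : ∀ t, (bag t).ncard ≤ k) :
    ∃ _ : LinearOrder V, ∀ v, (insert v (BB G w v)).ncard ≤ k := by
  classical
  obtain ⟨hT, hedge, hconn⟩ := htd
  obtain ⟨r⟩ := hT.connected.nonempty
  have hex : ∀ v, ∃ t, v ∈ bag t ∧ ∀ t', v ∈ bag t' → T.dist r t ≤ T.dist r t' := by
    intro v
    obtain ⟨t0⟩ := (hconn v).nonempty
    obtain ⟨t, ht, hm⟩ := (measure (T.dist r)).wf.has_min {t | v ∈ bag t} ⟨t0.1, t0.2⟩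
    exact ⟨t, ht, fun t' ht' => not_lt.1 (hm t' ht')⟩
  choose τ hτ hmin using hex
  obtain ⟨n, ⟨e⟩⟩ := Finite.exists_equiv_fin V
  let f : V → ℕ ×ₗ Fin n := fun v => toLex (T.dist r (τ v), e v)
  have hf : Function.Injective f := by
    intro x y h
    have h' : (T.dist r (τ x), e x) = (T.dist r (τ y), e y) := toLex.injective h
    simpa using (Prod.ext_iff.1 h').2
  letI inst : LinearOrder V := LinearOrder.lift' f hf
  have hle : ∀ x y : V, x ≤ y → T.dist r (τ x) ≤ T.dist r (τ y) := by
    intro x y h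
    have h' : f x ≤ f y := h
    rw [Prod.Lex.toLex_le_toLex] at h'
    rcases h' with h | h
    · exact h.le
    · exact h.1.le
  have htop : ∀ (x : V) (s t : ι), x ∈ bag s → x ∈ bag t → T.dist r s ≤ T.dist r (τ x) →
      below T r s t := by
    intro x s t hs ht hd
    obtain ⟨p⟩ := (hconn x).preconnected ⟨s, hs⟩ ⟨t, ht⟩
    exact top_walk hT (fun t' ht' => hd.trans (hmin x t' ht')) p (fun p => p.end_mem_support)
  have hwalk : ∀ (x : V) (s t t' : ι), x ∉ bag s → x ∈ bag t → x ∈ bag t' → below T r s t →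
      below T r s t' := by
    intro x s t t' hs ht ht' h
    obtain ⟨p⟩ := (hconn x).preconnected ⟨t, ht⟩ ⟨t', ht'⟩
    exact below_walk (C := {t | x ∈ bag t}) hs p h
  have hcl : ∀ (v a x : V) (q : ℝ≥0∞), Rch G w {y | v ≤ y} a x q →
      (∀ t, a ∈ bag t → below T r (τ v) t) → ∀ t, x ∈ bag t → below T r (τ v) t := by
    intro v a x q h
    induction h with
    | nil a ha => exact id
    | cons a b c q ha hab h ih =>
      intro hP
      refine ih fun t ht => ?_
      obtain ⟨t0, h1, h2⟩ := hedge a b hab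
      by_cases hb : b ∈ bag (τ v)
      · exact htop b _ _ hb ht (hle v b h.mem_left)
      · exact hwalk b _ t0 t hb h2 ht (hP t0 h1)
  refine ⟨inst, fun v => (Set.ncard_le_ncard ?_ (Set.toFinite _)).trans (hbag (τ v))⟩
  intro u hu
  rcases hu with rfl | ⟨huv, x, ⟨q, hq⟩, hadj⟩
  · exact hτ u
  · by_contra hcon
    obtain ⟨t0, h1, h2⟩ := hedge x u hadj
    have hb := hcl v v x q hq (fun t ht => htop v _ _ (hτ v) ht le_rfl) t0 h1
    have hb' := hwalk u _ t0 (τ u) hcon h2 (hτ u) hb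
    have := below_dist hT hb' (fun e => hcon (e ▸ hτ u))
    have := hle u v huv.le
    omega

end tree

theorem stmt_9 {V : Type} [Fintype V] (G : SimpleGraph V) (w : Sym2 V → ℝ≥0∞)
    (ρ : ℝ) (hρ : 0 < ρ) (k : ℕ)
    {ι : Type} (T : SimpleGraph ι) (bag : ι → Set V)
    (htd : IsTreeDecompOf G T bag) (hbag : ∀ t, (bag t).ncard ≤ k) :
    ∃ (P : Set (Set V)) (le : Set V → Set V → Prop),
      Setoid.IsPartition P ∧
      (∀ X ∈ P, ∀ u ∈ X, ∀ v ∈ X, gdist G w u v ≤ ENNReal.ofReal ρ) ∧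
      IsLinearOrderOn P le ∧
      ∀ r : ℝ, ρ < r →
        wcol G w P le r ≤
          min (k * 2 ^ k * (k + ⌈2 * r / ρ⌉₊).choose k)
            ((2 * ⌈2 * r / ρ⌉₊ + k + 1) ^ (3 * ⌈2 * r / ρ⌉₊ + 4)) := by
  obtain ⟨inst, hk⟩ := exists_order G w k bag htd hbag
  exact main_of_order G w ρ hρ k hk

end ScatterDim
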